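/- Let D be a positive squarefree integer, let b be an integer with gcd(b,D)=1, and let a : ℕ≥1 → ℂ with a(1)=1 split polynomially at every prime p dividing D. Then for every positive integer n one has a(n)·e(-bn/D) = (1/φ(D)) · Σ_{χ (mod D)} Σ_{m | (D/f_χ)*, m | n} B_m · f(χ,m,b) · χ*(n/m) · a(n/m), where the outer sum runs over all Dirichlet characters χ modulo D, the inner sum over the common positive divisors m of (D/f_χ)* = Π_{p | (D/f_χ)} p^{∂_p} and of n, and f(χ,m,b) = μ(D/f_χ) · conj(τ(χ*)) · conj(χ*(D/f_χ)) · χ*(bm) · r(m). -/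

import Mathlib

/-- `e x = exp(2πix)`. -/
noncomputable def e (x : ℝ) : ℂ := Complex.exp (2 * Real.pi * Complex.I * x)

/-- The Gauss sum `τ(ψ) = ∑_{b mod N} ψ(b) e(b/N)` of a Dirichlet character `ψ (mod N)`. -/
noncomputable def gaussSumOf {N : ℕ} (ψ : DirichletCharacter ℂ N) : ℂ :=
  ∑ b ∈ Finset.range N, ψ (b : ZMod N) * e ((b : ℝ) / N)

/-- The radical `r(m)` of a positive integer. -/
def rad (m : ℕ) : ℕ := ∏ p ∈ m.primeFactors, p

/-- The data `(∂, A)` witnesses that the sequence `a` splits polynomially at the prime `p`. -/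
def SplitsPolynomiallyAt (a : ℕ → ℂ) (dd : ℕ → ℕ) (A : ℕ → ℕ → ℂ) (p : ℕ) : Prop :=
  (∀ k n : ℕ, ¬ p ∣ n → a (p ^ k * n) = a (p ^ k) * a n) ∧
  A p 0 = 1 ∧ A p (dd p) ≠ 0 ∧
  (∀ k : ℕ, 1 ≤ k → ∑ ℓ ∈ Finset.range (min k (dd p) + 1), A p ℓ * a (p ^ (k - ℓ)) = 0)

/-- `B m = ∏_{p^ℓ ∥ m} A_ℓ(p)`. -/
noncomputable def Bcoef (A : ℕ → ℕ → ℂ) (m : ℕ) : ℂ :=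
  ∏ p ∈ m.primeFactors, A p (m.factorization p)

/-- `N* = ∏_{p | N} p^{∂_p}`. -/
def Dstar (N : ℕ) (dd : ℕ → ℕ) : ℕ := ∏ p ∈ N.primeFactors, p ^ dd p

/-- `f(χ,m,b) = μ(D/f_χ) conj(τ(χ*)) conj(χ*(D/f_χ)) χ*(bm) r(m)`. -/
noncomputable def fChi {D : ℕ} (χ : DirichletCharacter ℂ D) (m : ℕ) (b : ℤ) : ℂ :=
  (ArithmeticFunction.moebius (D / χ.conductor) : ℂ) *
    (starRingEnd ℂ) (gaussSumOf χ.primitiveCharacter) *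
    (starRingEnd ℂ) (χ.primitiveCharacter (((D / χ.conductor : ℕ) : ZMod χ.conductor))) *
    χ.primitiveCharacter ((b * m : ℤ) : ZMod χ.conductor) *
    (rad m : ℂ)

/-!
Fourier inversion on `(ℤ/D)ˣ`, evaluated at `1`, writes `e(k/D)` as the mean over `χ (mod D)` of the
Gauss sums `∑ χ(x) e(kx/D)`. Since `D` is squarefree, `f_χ` and `g = D/f_χ` are coprime, so by the
Chinese remainder theorem this Gauss sum is `χ*(g) conj(χ*(k)) τ(χ*)` times the Ramanujan sum
`c_g(k) = μ(g) ∏ (1 - p)`, with `p` running over the primes dividing `g` and `k`.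

On the other side, `χ*(bm) χ*(n/m) = χ*(bn)` does not depend on `m`, so what has to be evaluated is
`∑ B_m r(m) a(n/m)` over the common divisors `m` of `g*` and `n`. This is a composition of such
sums over the prime powers `p^{∂_p}` for `p ∣ g`. The recursion for `a(p^k)` makes each of these
multiplication by `1 - p` where `p ∣ n`, and it is multiplication by `1` elsewhere, so the same
product `∏ (1 - p)` appears. The minus sign in `e(-bn/D)` comes from complex conjugation.
-/

section GaussSums

open ZMod AddChar DirichletCharacter

theorem e_intCast_div {N : ℕ} [NeZero N] (j : ℤ) : e (j / N) = stdAddChar (j : ZMod N) := by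
  rw [stdAddChar_coe, e]
  push_cast
  ring_nf

theorem conj_e (x : ℝ) : (starRingEnd ℂ) (e x) = e (-x) := by
  simp [e, ← Complex.exp_conj, Complex.conj_ofNat]

theorem gaussSumOf_eq_gaussSum {N : ℕ} [NeZero N] (ψ : DirichletCharacter ℂ N) :
    gaussSumOf ψ = gaussSum ψ stdAddChar := by
  refine Finset.sum_bij' (fun b _ => (b : ZMod N)) (fun x _ => x.val) ?_ ?_ ?_ ?_ fun b _ => ?_
  · simp
  · simp [val_lt]
  · exact fun b hb => val_cast_of_lt (Finset.mem_range.1 hb)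
  · simp
  · rw [← Int.cast_natCast b, ← e_intCast_div, Int.cast_natCast, Int.cast_natCast]

theorem sum_gaussSum {N : ℕ} [NeZero N] (ψ : AddChar (ZMod N) ℂ) :
    ∑ χ : DirichletCharacter ℂ N, gaussSum χ ψ = N.totient * ψ 1 := by
  simp only [gaussSum]
  rw [Finset.sum_comm]
  simp [← Finset.sum_mul, sum_characters_eq ℂ]

theorem e_intCast_div_eq_sum {D : ℕ} [NeZero D] (k : ℤ) :
    e (k / D) = (D.totient : ℂ)⁻¹ *
      ∑ χ : DirichletCharacter ℂ D, gaussSum χ (stdAddChar.mulShift (k : ZMod D)) := by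
  have hD : (D.totient : ℂ) ≠ 0 := mod_cast (Nat.totient_pos.2 (NeZero.pos D)).ne'
  rw [sum_gaussSum, inv_mul_cancel_left₀ hD, mulShift_apply, mul_one, e_intCast_div]

section ChineseRemainder

variable {M N : ℕ} [NeZero M] [NeZero N]

theorem stdAddChar_intCast_mul_add_mul (u v : ℤ) :
    stdAddChar ((N * u + M * v : ℤ) : ZMod (M * N)) =
      stdAddChar (u : ZMod M) * stdAddChar (v : ZMod N) := by
  have hM : (M : ℂ) ≠ 0 := NeZero.ne _
  have hN : (N : ℂ) ≠ 0 := NeZero.ne _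
  simp only [stdAddChar_coe, ← Complex.exp_add]
  congr 1
  push_cast
  field_simp

theorem bijective_mul_val_add_mul_val (h : M.Coprime N) :
    Function.Bijective fun x : ZMod M × ZMod N =>
      ((N * x.1.val + M * x.2.val : ℕ) : ZMod (M * N)) := by
  refine (Fintype.bijective_iff_injective_and_card _).2 ⟨fun x y hxy => ?_, by simp [ZMod.card]⟩
  rw [natCast_eq_natCast_iff, ← Nat.modEq_and_modEq_iff_modEq_mul h, ← natCast_eq_natCast_iff,
    ← natCast_eq_natCast_iff] at hxy
  have hN : IsUnit (N : ZMod M) := (isUnit_iff_coprime N M).2 h.symm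
  have hM : IsUnit (M : ZMod N) := (isUnit_iff_coprime M N).2 h
  simpa [hN.mul_right_inj, hM.mul_right_inj, Prod.ext_iff] using hxy

theorem changeLevel_mul_changeLevel_natCast
    (χ : DirichletCharacter ℂ M) (ψ : DirichletCharacter ℂ N) (x : ℕ) :
    (changeLevel (dvd_mul_right M N) χ * changeLevel (dvd_mul_left N M) ψ) x = χ x * ψ x := by
  rw [MulChar.mul_apply]
  by_cases hx : IsUnit (x : ZMod (M * N))
  · obtain ⟨u, hu⟩ := hx
    rw [← hu, changeLevel_eq_cast_of_dvd, changeLevel_eq_cast_of_dvd, hu,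
      cast_natCast (dvd_mul_right M N), cast_natCast (dvd_mul_left N M)]
  · rw [MulChar.map_nonunit _ hx, zero_mul, eq_comm, mul_eq_zero]
    rw [isUnit_iff_coprime, Nat.coprime_mul_iff_right, not_and_or, ← isUnit_iff_coprime,
      ← isUnit_iff_coprime] at hx
    exact hx.imp (MulChar.map_nonunit _) (MulChar.map_nonunit _)

theorem gaussSum_changeLevel_mul_changeLevel (h : M.Coprime N)
    (χ : DirichletCharacter ℂ M) (ψ : DirichletCharacter ℂ N) (k : ℤ) :
    gaussSum (changeLevel (dvd_mul_right M N) χ * changeLevel (dvd_mul_left N M) ψ)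
        (stdAddChar.mulShift (k : ZMod (M * N))) =
      χ N * ψ M * gaussSum χ (stdAddChar.mulShift (k : ZMod M)) *
        gaussSum ψ (stdAddChar.mulShift (k : ZMod N)) := by
  have hterm (u : ZMod M) (v : ZMod N) :
      stdAddChar ((k : ZMod (M * N)) * ((N * u.val + M * v.val : ℕ) : ZMod (M * N))) =
        stdAddChar ((k : ZMod M) * u) * stdAddChar ((k : ZMod N) * v) := by
    have := stdAddChar_intCast_mul_add_mul (M := M) (N := N) (k * u.val) (k * v.val)
    push_cast [natCast_zmod_val] at this ⊢
    rw [← this]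
    ring_nf
  simp only [gaussSum, mulShift_apply]
  rw [← (bijective_mul_val_add_mul_val h).sum_comp, Fintype.sum_prod_type, mul_assoc (_ * _),
    Finset.sum_mul_sum, Finset.mul_sum]
  refine Fintype.sum_congr _ _ fun u => ?_
  rw [Finset.mul_sum]
  refine Fintype.sum_congr _ _ fun v => ?_
  rw [changeLevel_mul_changeLevel_natCast, hterm]
  push_cast [natCast_zmod_val, natCast_self, zero_mul, zero_add, add_zero, map_mul]
  ring

end ChineseRemainder

/-- The product `∏ (1 - p)` over the primes `p` dividing both `g` and `k`. For squarefree `g` it is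
`μ(g) c_g(k)`, where `c_g(k)` is the Ramanujan sum. -/
def ramanujanFactor (g : ℕ) (k : ℤ) : ℤ :=
  ∏ p ∈ g.primeFactors, if (p : ℤ) ∣ k then 1 - (p : ℤ) else 1

theorem ramanujanFactor_prime {p : ℕ} (hp : p.Prime) (k : ℤ) :
    ramanujanFactor p k = if (p : ℤ) ∣ k then 1 - (p : ℤ) else 1 := by
  rw [ramanujanFactor, hp.primeFactors, Finset.prod_singleton]

theorem ramanujanFactor_pow (g : ℕ) {n : ℕ} (hn : n ≠ 0) (k : ℤ) :
    ramanujanFactor (g ^ n) k = ramanujanFactor g k := by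
  rw [ramanujanFactor, Nat.primeFactors_pow g hn, ramanujanFactor]

theorem ramanujanFactor_mul_of_coprime {g h : ℕ} (hgh : g.Coprime h) (k : ℤ) :
    ramanujanFactor (g * h) k = ramanujanFactor g k * ramanujanFactor h k := by
  rw [ramanujanFactor, hgh.primeFactors_mul, Finset.prod_union hgh.disjoint_primeFactors,
    ramanujanFactor, ramanujanFactor]

theorem ramanujanFactor_isCoprime_mul {g : ℕ} {b : ℤ} (hb : IsCoprime b g) (k : ℤ) :
    ramanujanFactor g (b * k) = ramanujanFactor g k := by
  refine Finset.prod_congr rfl fun p hp => ?_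
  have hpb : IsCoprime (p : ℤ) b :=
    (hb.of_isCoprime_of_dvd_right (mod_cast Nat.dvd_of_mem_primeFactors hp)).symm
  simp only [show (p : ℤ) ∣ b * k ↔ (p : ℤ) ∣ k from ⟨hpb.dvd_of_dvd_mul_left, (·.mul_left b)⟩]

theorem gaussSum_one_mulShift_prime {p : ℕ} [Fact p.Prime] (k : ℤ) :
    gaussSum (1 : DirichletCharacter ℂ p) (stdAddChar.mulShift (k : ZMod p)) =
      -ramanujanFactor p k := by
  rw [ramanujanFactor_prime Fact.out]
  split_ifs with hk
  · rw [(intCast_zmod_eq_zero_iff_dvd k p).2 hk, mulShift_zero, gaussSum_one_one,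
      Nat.card_eq_fintype_card, card_units]
    push_cast [NeZero.one_le]
    ring
  · rw [gaussSum_one_left (isPrimitive_stdAddChar p
      ((intCast_zmod_eq_zero_iff_dvd k p).not.2 hk)), Int.cast_one]

theorem gaussSum_one_mulShift_of_squarefree {g : ℕ} [hg0 : NeZero g] (hg : Squarefree g) (k : ℤ) :
    gaussSum (1 : DirichletCharacter ℂ g) (stdAddChar.mulShift (k : ZMod g)) =
      ArithmeticFunction.moebius g * ramanujanFactor g k := by
  induction g using Nat.recOnPosPrimePosCoprime generalizing hg0 with
  | zero => exact absurd rfl (NeZero.ne 0)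
  | one =>
    rw [Subsingleton.elim (k : ZMod 1) 0, mulShift_zero, gaussSum_one_one]
    simp [ramanujanFactor]
  | prime_pow p n hp hn =>
    have hpn : p = p ^ n := by
      rw [((Nat.squarefree_pow_iff hp.ne_one hn.ne').1 hg).2, pow_one]
    have : Fact (p ^ n).Prime := ⟨hpn ▸ hp⟩
    rw [gaussSum_one_mulShift_prime, ArithmeticFunction.moebius_apply_prime Fact.out,
      Int.cast_neg, Int.cast_one, neg_one_mul]
  | coprime g h hg1 hh1 hgh ihg ihh =>
    have := NeZero.of_gt hg1
    have := NeZero.of_gt hh1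
    have hmul := gaussSum_changeLevel_mul_changeLevel hgh 1 1 k
    rw [changeLevel_one, changeLevel_one, one_mul,
      MulChar.one_apply ((isUnit_iff_coprime h g).2 hgh.symm),
      MulChar.one_apply ((isUnit_iff_coprime g h).2 hgh), one_mul, one_mul,
      ihg hg.of_mul_left, ihh hg.of_mul_right] at hmul
    rw [hmul, ramanujanFactor_mul_of_coprime hgh,
      ArithmeticFunction.isMultiplicative_moebius.map_mul_of_coprime hgh]
    push_cast
    ring

theorem gaussSum_mulShift_changeLevel {D f g : ℕ} [NeZero D] [NeZero f] (hD : D = f * g)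
    (hsq : Squarefree D) (χ : DirichletCharacter ℂ f) (hχ : χ.IsPrimitive) (k : ℤ) :
    gaussSum (changeLevel (Dvd.intro g hD.symm) χ) (stdAddChar.mulShift (k : ZMod D)) =
      χ g * (starRingEnd ℂ) (χ k) * gaussSum χ stdAddChar *
        (ArithmeticFunction.moebius g * ramanujanFactor g k) := by
  subst hD
  have : NeZero g := ⟨right_ne_zero_of_mul (NeZero.ne (f * g))⟩
  have hfg : f.Coprime g := Nat.coprime_of_squarefree_mul hsq
  have hmul := gaussSum_changeLevel_mul_changeLevel hfg χ 1 k
  rw [changeLevel_one, mul_one, MulChar.one_apply ((isUnit_iff_coprime f g).2 hfg), mul_one,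
    gaussSum_mulShift_of_isPrimitive _ hχ, gaussSum_one_mulShift_of_squarefree hsq.of_mul_right,
    ← MulChar.star_apply'] at hmul
  rw [hmul, starRingEnd_apply]
  ring

theorem gaussSum_mulShift_of_squarefree {D : ℕ} [NeZero D] (hsq : Squarefree D)
    (χ : DirichletCharacter ℂ D) (k : ℤ) :
    gaussSum χ (stdAddChar.mulShift (k : ZMod D)) =
      χ.primitiveCharacter (D / χ.conductor : ℕ) * (starRingEnd ℂ) (χ.primitiveCharacter k) *
        gaussSumOf χ.primitiveCharacter *
        (ArithmeticFunction.moebius (D / χ.conductor) * ramanujanFactor (D / χ.conductor) k) := by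
  have : NeZero χ.conductor := ⟨χ.conductor_ne_zero⟩
  rw [gaussSumOf_eq_gaussSum, ← gaussSum_mulShift_changeLevel
    (Nat.mul_div_cancel' χ.conductor_dvd_level).symm hsq _ χ.primitiveCharacter_isPrimitive,
    changeLevel_primitiveCharacter]

end GaussSums

/-- The Dirichlet convolution of `w` and `a` with `w` restricted to the divisors of `M`, as a
function of `n`. As an operator on `a` it is multiplicative in `M` when `w` is. -/
def truncatedConvolution {R : Type*} [CommSemiring R] (w a : ℕ → R) (M n : ℕ) : R :=
  ∑ m ∈ M.divisors with m ∣ n, w m * a (n / m)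

section TruncatedConvolution

variable {R : Type*} [CommSemiring R] {w a : ℕ → R} {M N : ℕ}

theorem truncatedConvolution_one (n : ℕ) : truncatedConvolution w a 1 n = w 1 * a n := by
  simp [truncatedConvolution, Finset.sum_filter]

theorem truncatedConvolution_mul (hw : ∀ l m, l.Coprime m → w (l * m) = w l * w m)
    (hMN : M.Coprime N) (n : ℕ) :
    truncatedConvolution w a (M * N) n =
      truncatedConvolution w (truncatedConvolution w a N) M n := by
  simp only [truncatedConvolution, Finset.sum_filter, Finset.mul_sum]
  rw [Nat.divisors_mul, Finset.mul_def, Finset.sum_image hMN.mul_injOn_divisors,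
    Finset.sum_product]
  refine Finset.sum_congr rfl fun l hl => ?_
  by_cases hln : l ∣ n
  · rw [if_pos hln]
    refine Finset.sum_congr rfl fun m hm => ?_
    have hlm : l.Coprime m := hMN.of_dvd (Nat.dvd_of_mem_divisors hl) (Nat.dvd_of_mem_divisors hm)
    simp only [Nat.dvd_div_iff_mul_dvd hln, hw l m hlm, Nat.div_div_eq_div_mul, mul_ite, mul_assoc,
      mul_zero]
  · rw [if_neg hln]
    exact Finset.sum_eq_zero fun m _ => if_neg fun h => hln (dvd_of_mul_right_dvd h)

theorem truncatedConvolution_prime_pow {p : ℕ} (hp : p.Prime) (d : ℕ) {k u : ℕ} (hu : ¬ p ∣ u) :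
    truncatedConvolution w a (p ^ d) (p ^ k * u) =
      ∑ ℓ ∈ Finset.range (min k d + 1), w (p ^ ℓ) * a (p ^ (k - ℓ) * u) := by
  rw [truncatedConvolution, Finset.sum_filter, Nat.sum_divisors_prime_pow hp, ← Finset.sum_filter]
  have hdvd (ℓ : ℕ) : p ^ ℓ ∣ p ^ k * u ↔ ℓ ≤ k := by
    have hc : (p ^ ℓ).Coprime u := ((hp.coprime_iff_not_dvd).2 hu).pow_left ℓ
    rw [hc.dvd_mul_right, Nat.pow_dvd_pow_iff_le_right hp.one_lt]
  have hrange : (Finset.range (d + 1)).filter (p ^ · ∣ p ^ k * u) =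
      Finset.range (min k d + 1) := by
    grind
  refine Finset.sum_congr hrange fun ℓ hℓ => ?_
  have hle : ℓ ≤ k := by grind
  rw [← Nat.sub_add_cancel hle, pow_add, mul_right_comm, Nat.mul_div_cancel _ (pow_pos hp.pos ℓ),
    Nat.add_sub_cancel]

end TruncatedConvolution

theorem rad_mul {l m : ℕ} (h : l.Coprime m) : rad (l * m) = rad l * rad m := by
  simp only [rad, h.primeFactors_mul, Finset.prod_union h.disjoint_primeFactors]

theorem rad_prime_pow {p ℓ : ℕ} (hp : p.Prime) (hℓ : ℓ ≠ 0) : rad (p ^ ℓ) = p := by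
  rw [rad, Nat.primeFactors_prime_pow hℓ hp, Finset.prod_singleton]

theorem Bcoef_eq_factorization_prod (A : ℕ → ℕ → ℂ) (m : ℕ) :
    Bcoef A m = m.factorization.prod A := rfl

theorem Bcoef_mul (A : ℕ → ℕ → ℂ) {l m : ℕ} (h : l.Coprime m) :
    Bcoef A (l * m) = Bcoef A l * Bcoef A m := by
  simp only [Bcoef_eq_factorization_prod, Nat.factorization_mul_of_coprime h]
  exact Finsupp.prod_add_index_of_disjoint h.disjoint_primeFactors A

theorem Bcoef_prime_pow {A : ℕ → ℕ → ℂ} {p : ℕ} (hp : p.Prime) (h0 : A p 0 = 1) (ℓ : ℕ) :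
    Bcoef A (p ^ ℓ) = A p ℓ := by
  rw [Bcoef_eq_factorization_prod, hp.factorization_pow, Finsupp.prod_single_index h0]

theorem Dstar_mul {M N : ℕ} (h : M.Coprime N) (dd : ℕ → ℕ) :
    Dstar (M * N) dd = Dstar M dd * Dstar N dd := by
  simp only [Dstar, h.primeFactors_mul, Finset.prod_union h.disjoint_primeFactors]

theorem Dstar_prime_pow {p k : ℕ} (hp : p.Prime) (hk : k ≠ 0) (dd : ℕ → ℕ) :
    Dstar (p ^ k) dd = p ^ dd p := by
  rw [Dstar, Nat.primeFactors_prime_pow hk hp, Finset.prod_singleton]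

theorem coprime_Dstar {M N : ℕ} (h : M.Coprime N) (dd : ℕ → ℕ) : M.Coprime (Dstar N dd) :=
  Nat.Coprime.prod_right fun _ hp =>
    (h.coprime_dvd_right (Nat.dvd_of_mem_primeFactors hp)).pow_right _

/-- The coefficients `B_m r(m)`, which are all that depends on `m` in the inner sum of the identity
apart from `a (n / m)`. -/
noncomputable def radicalWeight (A : ℕ → ℕ → ℂ) (m : ℕ) : ℂ := Bcoef A m * rad m

theorem radicalWeight_mul (A : ℕ → ℕ → ℂ) {l m : ℕ} (h : l.Coprime m) :
    radicalWeight A (l * m) = radicalWeight A l * radicalWeight A m := by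
  rw [radicalWeight, Bcoef_mul A h, rad_mul h, Nat.cast_mul, mul_mul_mul_comm, radicalWeight,
    radicalWeight]

theorem radicalWeight_prime_pow {A : ℕ → ℕ → ℂ} {p ℓ : ℕ} (hp : p.Prime) (h0 : A p 0 = 1)
    (hℓ : ℓ ≠ 0) : radicalWeight A (p ^ ℓ) = A p ℓ * p := by
  rw [radicalWeight, Bcoef_prime_pow hp h0, rad_prime_pow hp hℓ]

theorem radicalWeight_one (A : ℕ → ℕ → ℂ) : radicalWeight A 1 = 1 := by
  simp [radicalWeight, Bcoef, rad]

section Splitting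

variable {a : ℕ → ℂ} {dd : ℕ → ℕ} {A : ℕ → ℕ → ℂ}

theorem SplitsPolynomiallyAt.sum_radicalWeight {p : ℕ} (hp : p.Prime)
    (hs : SplitsPolynomiallyAt a dd A p) {k : ℕ} (hk : k ≠ 0) :
    ∑ ℓ ∈ Finset.range (min k (dd p) + 1), radicalWeight A (p ^ ℓ) * a (p ^ (k - ℓ)) =
      (1 - p) * a (p ^ k) := by
  obtain ⟨-, hA0, -, hrec⟩ := hs
  have htail : ∑ ℓ ∈ Finset.range (min k (dd p)), A p (ℓ + 1) * a (p ^ (k - (ℓ + 1))) =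
      -a (p ^ k) := by
    have h := hrec k (Nat.one_le_iff_ne_zero.2 hk)
    rw [Finset.sum_range_succ', hA0, one_mul] at h
    exact eq_neg_of_add_eq_zero_left h
  rw [Finset.sum_range_succ', pow_zero, radicalWeight_one, one_mul, Nat.sub_zero]
  simp only [radicalWeight_prime_pow hp hA0 (Nat.succ_ne_zero _), mul_right_comm _ (p : ℂ)]
  rw [← Finset.sum_mul, htail]
  ring

theorem SplitsPolynomiallyAt.truncatedConvolution_prime_pow {p : ℕ} (hp : p.Prime)
    (hs : SplitsPolynomiallyAt a dd A p) {n : ℕ} (hn : n ≠ 0) :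
    truncatedConvolution (radicalWeight A) a (p ^ dd p) n = ramanujanFactor p n * a n := by
  obtain ⟨k, u, hu, rfl⟩ := Nat.exists_eq_pow_mul_and_not_dvd hn p hp.ne_one
  rw [_root_.truncatedConvolution_prime_pow hp _ hu, ramanujanFactor_prime hp]
  rcases eq_or_ne k 0 with rfl | hk
  · simp [radicalWeight_one, Int.natCast_dvd_natCast, hu]
  · have hdvd : (p : ℤ) ∣ (p ^ k * u : ℕ) := mod_cast (dvd_pow_self p hk).mul_right u
    simp only [hs.1 _ u hu, ← mul_assoc, ← Finset.sum_mul, hs.sum_radicalWeight hp hk, if_pos hdvd]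
    push_cast
    rfl

theorem truncatedConvolution_Dstar {g : ℕ}
    (hs : ∀ p : ℕ, p.Prime → p ∣ g → SplitsPolynomiallyAt a dd A p) {n : ℕ} (hn : n ≠ 0) :
    truncatedConvolution (radicalWeight A) a (Dstar g dd) n = ramanujanFactor g n * a n := by
  induction g using Nat.recOnPosPrimePosCoprime generalizing n with
  | zero => simp [Dstar, truncatedConvolution_one, radicalWeight_one, ramanujanFactor]
  | one => simp [Dstar, truncatedConvolution_one, radicalWeight_one, ramanujanFactor]
  | prime_pow p k hp hk =>
    rw [Dstar_prime_pow hp hk.ne', ramanujanFactor_pow p hk.ne']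
    exact (hs p hp (dvd_pow_self p hk.ne')).truncatedConvolution_prime_pow hp hn
  | coprime g h _ _ hgh ihg ihh =>
    have hsg (p : ℕ) (hp : p.Prime) (hpg : p ∣ g) := hs p hp (hpg.mul_right h)
    have hsh (p : ℕ) (hp : p.Prime) (hph : p ∣ h) := hs p hp (hph.mul_left g)
    have hDh : (Dstar g dd).Coprime h := (coprime_Dstar hgh.symm dd).symm
    have hinner : ∀ m ∈ (Dstar g dd).divisors.filter (· ∣ n),
        truncatedConvolution (radicalWeight A) a (Dstar h dd) (n / m) =
          ramanujanFactor h n * a (n / m) := fun m hm => by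
      obtain ⟨hmM, l, rfl⟩ := Finset.mem_filter.1 hm
      have hmh : IsCoprime (m : ℤ) h :=
        Nat.isCoprime_iff_coprime.2 (hDh.coprime_dvd_left (Nat.dvd_of_mem_divisors hmM))
      rw [Nat.mul_div_cancel_left l (Nat.pos_of_mem_divisors hmM),
        ihh hsh (right_ne_zero_of_mul hn), Nat.cast_mul, ramanujanFactor_isCoprime_mul hmh]
    calc truncatedConvolution (radicalWeight A) a (Dstar (g * h) dd) n
        = truncatedConvolution (radicalWeight A)
            (truncatedConvolution (radicalWeight A) a (Dstar h dd)) (Dstar g dd) n := by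
          rw [Dstar_mul hgh, truncatedConvolution_mul (fun _ _ => radicalWeight_mul A)
            (coprime_Dstar hDh dd)]
      _ = ramanujanFactor h n * truncatedConvolution (radicalWeight A) a (Dstar g dd) n := by
          rw [truncatedConvolution, truncatedConvolution, Finset.mul_sum]
          exact Finset.sum_congr rfl fun m hm => by rw [hinner m hm, mul_left_comm]
      _ = ramanujanFactor (g * h) n * a n := by
          rw [ihg hsg hn, ramanujanFactor_mul_of_coprime hgh]
          push_cast
          ring

theorem sum_Bcoef_mul_fChi {D : ℕ} (χ : DirichletCharacter ℂ D) (b : ℤ) (M n : ℕ) :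
    ∑ m ∈ M.divisors.filter (· ∣ n),
        Bcoef A m * fChi χ m b * χ.primitiveCharacter ((n / m : ℕ) : ZMod χ.conductor) *
          a (n / m) =
      (ArithmeticFunction.moebius (D / χ.conductor) : ℂ) *
        (starRingEnd ℂ) (gaussSumOf χ.primitiveCharacter) *
        (starRingEnd ℂ) (χ.primitiveCharacter ((D / χ.conductor : ℕ) : ZMod χ.conductor)) *
        χ.primitiveCharacter ((b * n : ℤ) : ZMod χ.conductor) *
        truncatedConvolution (radicalWeight A) a M n := by
  rw [truncatedConvolution, Finset.mul_sum]
  refine Finset.sum_congr rfl fun m hm => ?_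
  obtain ⟨hmM, l, rfl⟩ := Finset.mem_filter.1 hm
  rw [Nat.mul_div_cancel_left l (Nat.pos_of_mem_divisors hmM), fChi, radicalWeight]
  push_cast [map_mul]
  ring

end Splitting

/-- Coefficientwise form of Lemma 3.3: for `D` squarefree, `(b,D)=1` and `a` splitting
polynomially at all `p | D`, for every `n ≥ 1`:
`a(n) e(-bn/D) = (1/φ(D)) ∑_{χ (mod D)} ∑_{m | (D/f_χ)*, m | n} B_m f(χ,m,b) χ*(n/m) a(n/m)`. -/
theorem coefficient_twist_identity
    (D : ℕ) (hD : 0 < D) (hsq : Squarefree D)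
    (b : ℤ) (hb : b.gcd D = 1)
    (a : ℕ → ℂ) (ha1 : a 1 = 1)
    (dd : ℕ → ℕ) (A : ℕ → ℕ → ℂ)
    (hsplit : ∀ p : ℕ, p.Prime → p ∣ D → SplitsPolynomiallyAt a dd A p)
    (n : ℕ) (hn : 0 < n) :
    a n * e (-((b : ℝ) * n) / D) =
      (D.totient : ℂ)⁻¹ *
        ∑ χ : DirichletCharacter ℂ D,
          ∑ m ∈ (Dstar (D / χ.conductor) dd).divisors.filter (· ∣ n),
            Bcoef A m * fChi χ m b *
              χ.primitiveCharacter (((n / m : ℕ) : ZMod χ.conductor)) * a (n / m) := by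
  have : NeZero D := ⟨hD.ne'⟩
  have hexp : -((b : ℝ) * n) / D = -(((b * n : ℤ) : ℝ) / D) := by
    push_cast
    ring
  rw [hexp, ← conj_e, e_intCast_div_eq_sum, map_mul, map_inv₀, Complex.conj_natCast, map_sum,
    mul_left_comm, Finset.mul_sum]
  congr 1
  refine Finset.sum_congr rfl fun χ _ => ?_
  have hgD : D / χ.conductor ∣ D := Nat.div_dvd_of_dvd χ.conductor_dvd_level
  have hbg : IsCoprime b (D / χ.conductor : ℕ) :=
    (Int.isCoprime_iff_gcd_eq_one.2 hb).of_isCoprime_of_dvd_right (mod_cast hgD)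
  rw [sum_Bcoef_mul_fChi, gaussSum_mulShift_of_squarefree hsq,
    truncatedConvolution_Dstar (fun p hp hpg => hsplit p hp (hpg.trans hgD)) hn.ne',
    ramanujanFactor_isCoprime_mul hbg]
  simp only [map_mul, map_intCast, Complex.conj_conj]
  ring
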